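/- The intersection of the Markov spectrum M with the open interval ((15−√30)/3, (332001+3760√30)/110409) consists of exactly one point, namely √9797/31, which is therefore an isolated point of M. Moreover, both endpoints (15−√30)/3 and (332001+3760√30)/110409 belong to M. -/

import Mathlib

open Filter Set MeasureTheory
open scoped ENNReal

/-- Finite continued fraction `[a 0; a 1, ..., a n]`. -/
noncomputable def cfConv : (ℕ → ℝ) → ℕ → ℝ
  | a, 0 => a 0
  | a, n + 1 => a 0 + 1 / cfConv (fun i => a (i + 1)) n

/-- Value of the infinite continued fraction `[a 0; a 1, a 2, ...]`,
as the limit of its convergents. -/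
noncomputable def cfVal (a : ℕ → ℝ) : ℝ := limUnder atTop (cfConv a)

/-- `λ_k(α) = [α_k; α_{k+1}, ...] + [0; α_{k-1}, α_{k-2}, ...]`. -/
noncomputable def lambdaVal (α : ℤ → ℕ) (k : ℤ) : ℝ :=
  cfVal (fun n => (α (k + n) : ℝ)) +
  cfVal (fun n => if n = 0 then 0 else (α (k - n) : ℝ))

/-- The Markov value `m(α) = sup_{k ∈ ℤ} λ_k(α)`. -/
noncomputable def markovValue (α : ℤ → ℕ) : ℝ := ⨆ k : ℤ, lambdaVal α k

/-- The Markov spectrum. -/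
def markovSpectrum : Set ℝ :=
  { x | ∃ α : ℤ → ℕ, (∀ n, 0 < α n) ∧ BddAbove (range (lambdaVal α)) ∧
      markovValue α = x }

/-- The dimension function `d(t) = dim_H (M ∩ (-∞, t))`. -/
noncomputable def dimFun (t : ℝ) : ℝ≥0∞ := dimH (markovSpectrum ∩ Iio t)

/-!
Below `(332001 + 3760√30) / 110409` a sequence has only the letters `1` and `2`, and every tail
`[0; α_k, α_{k+1}, …]` is at least `[0; 2, 1, 2, 2, 2, 1, 2, 2, …] = √30 / 4 - 1`. These tail bounds
turn a finite word around a letter `2` into a lower bound for `λ`, hence forbid many words. A `λ`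
above `(15 - √30) / 3` forces the block `2 1111 2 112` or its mirror image around its position, and
the forbidden words propagate this block to the whole `8`-periodic sequence with period
`2 112 1111`. All the forbidden words but one are excluded with room to spare. The exception is
`22 1111 2 11 2 1111 22`: if `x` and `y` are the tails on either side of `2 11 2`, the larger `λ`
at the two central letters `2` is smallest when `x` and `y` both take their least value, where it
equals the right endpoint. Explicit sequences attain the two endpoints and the isolated value.
-/

/-- The left endpoint of the gap. -/
noncomputable def gapLeft : ℝ := (15 - √30) / 3

/-- The right endpoint of the gap. -/
noncomputable def gapRight : ℝ := (332001 + 3760 * √30) / 110409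

/-- The isolated point of the Markov spectrum between `gapLeft` and `gapRight`. -/
noncomputable def gapPoint : ℝ := √9797 / 31

/-! ### Convergence of continued fractions -/

theorem cfConv_succ (a : ℕ → ℝ) (n : ℕ) :
    cfConv a (n + 1) = a 0 + 1 / cfConv (fun i => a (i + 1)) n := rfl

theorem one_le_cfConv {a : ℕ → ℝ} (ha : ∀ n, 1 ≤ a n) (n : ℕ) : 1 ≤ cfConv a n := by
  induction n generalizing a with
  | zero => exact ha 0
  | succ n ih =>
    have htail : 0 ≤ 1 / cfConv (fun i => a (i + 1)) n :=
      one_div_nonneg.2 (zero_le_one.trans (ih fun i => ha (i + 1)))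
    rw [cfConv_succ]
    linarith [ha 0]

theorem cfConv_mem_Icc {a : ℕ → ℝ} (ha : ∀ n, 1 ≤ a (n + 1)) (n : ℕ) :
    cfConv a n ∈ Icc (a 0) (a 0 + 1) := by
  cases n with
  | zero => exact ⟨le_rfl, (lt_add_one _).le⟩
  | succ n =>
    have htail := one_le_cfConv ha n
    exact ⟨le_add_of_nonneg_right (one_div_nonneg.2 (zero_le_one.trans htail)),
      add_le_add_right (div_le_one_of_le₀ htail (zero_le_one.trans htail)) _⟩

theorem abs_one_div_add_one_div_sub_le {b x y : ℝ} (hb : 1 ≤ b) (hx : 1 ≤ x) (hy : 1 ≤ y) :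
    |1 / (b + 1 / x) - 1 / (b + 1 / y)| ≤ 1 / 4 * |x - y| := by
  have hX : 2 ≤ b * x + 1 := by nlinarith
  have hY : 2 ≤ b * y + 1 := by nlinarith
  have hdiff : 1 / (b + 1 / x) - 1 / (b + 1 / y) =
      1 / ((b * x + 1) * (b * y + 1)) * (x - y) := by
    field_simp
    ring
  rw [hdiff, abs_mul, abs_of_pos (by positivity)]
  gcongr
  nlinarith

theorem abs_cfConv_sub_le {a : ℕ → ℝ} (ha : ∀ n, 1 ≤ a n) (j n m : ℕ) :
    |cfConv a (n + 2 * j) - cfConv a (m + 2 * j)| ≤ (1 / 4) ^ j := by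
  induction j generalizing a with
  | zero =>
    have hn := cfConv_mem_Icc (fun i => ha (i + 1)) n
    have hm := cfConv_mem_Icc (fun i => ha (i + 1)) m
    rw [pow_zero]
    exact (abs_sub_le_of_le_of_le hn.1 hn.2 hm.1 hm.2).trans_eq (add_sub_cancel_left _ _)
  | succ j ih =>
    have two_steps (n : ℕ) : cfConv a (n + 2 * (j + 1)) =
        a 0 + 1 / (a 1 + 1 / cfConv (fun i => a (i + 2)) (n + 2 * j)) := rfl
    have ha' (i : ℕ) : 1 ≤ a (i + 2) := ha (i + 2)
    rw [two_steps, two_steps, add_sub_add_left_eq_sub, pow_succ']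
    calc _ ≤ 1 / 4 * |cfConv (fun i => a (i + 2)) (n + 2 * j) -
              cfConv (fun i => a (i + 2)) (m + 2 * j)| :=
          abs_one_div_add_one_div_sub_le (ha 1) (one_le_cfConv ha' _) (one_le_cfConv ha' _)
      _ ≤ 1 / 4 * (1 / 4) ^ j := by gcongr; exact ih ha'

theorem tendsto_cfConv {a : ℕ → ℝ} (ha : ∀ n, 1 ≤ a n) :
    Tendsto (cfConv a) atTop (nhds (cfVal a)) := by
  have hcauchy : CauchySeq (cfConv a) := by
    refine Metric.cauchySeq_iff'.2 fun ε hε => ?_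
    obtain ⟨j, hj⟩ := exists_pow_lt_of_lt_one hε (by norm_num : (1 / 4 : ℝ) < 1)
    refine ⟨2 * j, fun n hn => ?_⟩
    have h := abs_cfConv_sub_le ha j (n - 2 * j) 0
    rw [Nat.sub_add_cancel hn, zero_add] at h
    exact h.trans_lt hj
  exact tendsto_nhds_limUnder (cauchySeq_tendsto_of_complete hcauchy)

theorem one_le_cfVal {a : ℕ → ℝ} (ha : ∀ n, 1 ≤ a n) : 1 ≤ cfVal a :=
  ge_of_tendsto' (tendsto_cfConv ha) (one_le_cfConv ha)

theorem cfVal_eq {a : ℕ → ℝ} (ha : ∀ n, 1 ≤ a (n + 1)) :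
    cfVal a = a 0 + 1 / cfVal (fun i => a (i + 1)) := by
  have htail : cfVal (fun i => a (i + 1)) ≠ 0 := (zero_lt_one.trans_le (one_le_cfVal ha)).ne'
  have h : Tendsto (fun n => cfConv a (n + 1)) atTop
      (nhds (a 0 + 1 / cfVal (fun i => a (i + 1)))) :=
    tendsto_const_nhds.add (tendsto_const_nhds.div (tendsto_cfConv ha) htail)
  exact ((tendsto_add_atTop_iff_nat 1).1 h).limUnder_eq

/-! ### Tails, reflection and translation of bi-infinite sequences -/

/-- The tail `[0; α_k, α_{k+1}, ...]`. -/
noncomputable def cfTail (α : ℤ → ℕ) (k : ℤ) : ℝ := 1 / cfVal (fun n => (α (k + n) : ℝ))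

/-- The sequence read backwards. The tail `[0; α_k, α_{k-1}, ...]` of `α` to the left is the tail of
`reversal α` at `-k`. -/
def reversal (α : ℤ → ℕ) : ℤ → ℕ := fun n => α (-n)

@[simp]
theorem reversal_reversal (α : ℤ → ℕ) : reversal (reversal α) = α :=
  funext fun n => congrArg α (neg_neg n)

theorem cfTail_congr {α β : ℤ → ℕ} {j k : ℤ} (h : ∀ n : ℕ, α (j + n) = β (k + n)) :
    cfTail α j = cfTail β k := by
  simp only [cfTail, h]

theorem lambdaVal_congr {α β : ℤ → ℕ} {j k : ℤ} (h : ∀ n, α (j + n) = β (k + n)) :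
    lambdaVal α j = lambdaVal β k := by
  simp only [lambdaVal, sub_eq_add_neg, h]

theorem lambdaVal_shift (α : ℤ → ℕ) (j k : ℤ) :
    lambdaVal (fun n => α (j + n)) k = lambdaVal α (j + k) :=
  lambdaVal_congr fun n => by rw [add_assoc]

section Positive

variable {α : ℤ → ℕ} (hα : ∀ n, 0 < α n)
include hα

theorem one_le_cfVal_tail (k : ℤ) : 1 ≤ cfVal (fun n => (α (k + n) : ℝ)) :=
  one_le_cfVal fun _ => Nat.one_le_cast.2 (hα _)

theorem cfTail_pos (k : ℤ) : 0 < cfTail α k :=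
  one_div_pos.2 (zero_lt_one.trans_le (one_le_cfVal_tail hα k))

theorem cfTail_le_one (k : ℤ) : cfTail α k ≤ 1 :=
  div_le_one_of_le₀ (one_le_cfVal_tail hα k) (zero_le_one.trans (one_le_cfVal_tail hα k))

theorem cfVal_eq_add_cfTail (k : ℤ) :
    cfVal (fun n => (α (k + n) : ℝ)) = α k + cfTail α (k + 1) := by
  have hdigits (n : ℕ) : (1 : ℝ) ≤ α (k + (n + 1 : ℕ)) := Nat.one_le_cast.2 (hα _)
  rw [cfVal_eq hdigits, cfTail]
  simp only [Nat.cast_zero, add_zero, Nat.cast_add, Nat.cast_one, add_assoc, add_comm (1 : ℤ)]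

theorem cfTail_eq (k : ℤ) : cfTail α k = 1 / (α k + cfTail α (k + 1)) := by
  rw [← cfVal_eq_add_cfTail hα, cfTail]

theorem one_div_add_one_le_cfTail {k : ℤ} {N : ℕ} (h : α k ≤ N) :
    1 / ((N : ℝ) + 1) ≤ cfTail α k := by
  have hpos := cfTail_pos hα (k + 1)
  rw [cfTail_eq hα]
  gcongr
  exact cfTail_le_one hα (k + 1)

theorem lambdaVal_eq (k : ℤ) :
    lambdaVal α k = α k + cfTail α (k + 1) + cfTail (reversal α) (1 - k) := by
  have hleft : cfVal (fun n => if n = 0 then 0 else (α (k - n) : ℝ)) =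
      cfTail (reversal α) (1 - k) := by
    rw [cfVal_eq, cfTail]
    · have index (n : ℕ) : k - ((n : ℤ) + 1) = -(1 - k + n) := by ring
      simp only [if_true, Nat.add_eq_zero_iff, one_ne_zero, and_false, if_false, zero_add,
        reversal, Nat.cast_add, Nat.cast_one, index]
    · exact fun n => Nat.one_le_cast.2 (hα _)
  rw [lambdaVal, cfVal_eq_add_cfTail hα, hleft]

theorem lambdaVal_reversal (k : ℤ) : lambdaVal (reversal α) k = lambdaVal α (-k) := by
  rw [lambdaVal_eq hα, lambdaVal_eq (α := reversal α) fun n => hα (-n), reversal_reversal,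
    sub_neg_eq_add, add_comm 1 k, neg_add_eq_sub, reversal]
  ring

theorem lambdaVal_sub_of_symm {c : ℤ} (h : ∀ n, α (c - n) = α n) (k : ℤ) :
    lambdaVal α (c - k) = lambdaVal α k := by
  rw [← neg_sub, ← lambdaVal_reversal hα]
  refine lambdaVal_congr fun n => ?_
  rw [reversal, ← h]
  congr 1
  ring

end Positive

theorem cfTail_reversal_of_symm {α : ℤ → ℕ} {c : ℤ} (h : ∀ n, α (c - n) = α n) (k : ℤ) :
    cfTail (reversal α) k = cfTail α (c + k) :=
  cfTail_congr fun n => by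
    rw [reversal, ← h]
    congr 1
    ring

/-! ### Markov values -/

theorem markovValue_shift (α : ℤ → ℕ) (j : ℤ) :
    markovValue (fun n => α (j + n)) = markovValue α := by
  simp only [markovValue, lambdaVal_shift]
  exact (Equiv.addLeft j).iSup_comp (g := lambdaVal α)

theorem markovValue_reversal {α : ℤ → ℕ} (hα : ∀ n, 0 < α n) :
    markovValue (reversal α) = markovValue α := by
  simp only [markovValue, lambdaVal_reversal hα]
  exact (Equiv.neg ℤ).iSup_comp (g := lambdaVal α)

theorem markovValue_eq_of_isGreatest {α : ℤ → ℕ} {x : ℝ}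
    (h : IsGreatest (range (lambdaVal α)) x) : markovValue α = x := h.csSup_eq

theorem mem_markovSpectrum_of_isGreatest {α : ℤ → ℕ} (hα : ∀ n, 0 < α n) {x : ℝ}
    (h : IsGreatest (range (lambdaVal α)) x) : x ∈ markovSpectrum :=
  ⟨α, hα, h.bddAbove, markovValue_eq_of_isGreatest h⟩

/-! ### Finite words -/

/-- The word `w` occurs in `α` from position `k` on. -/
def Reads (α : ℤ → ℕ) : ℤ → List ℕ → Prop
  | _, [] => True
  | k, a :: w => α k = a ∧ Reads α (k + 1) w

/-- The word `u.reverse ++ a :: v` occurs in `α` with the letter `a` at position `k`. Both `u` and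
`v` are listed outwards from the centre, so that each is the beginning of a tail. -/
def Around (α : ℤ → ℕ) (k : ℤ) (u : List ℕ) (a : ℕ) (v : List ℕ) : Prop :=
  α k = a ∧ Reads (reversal α) (1 - k) u ∧ Reads α (k + 1) v

/-- The value `[0; w, 1/t]` of the finite continued fraction with digits `w` continued by the
tail `t`. -/
noncomputable def cfWord : List ℕ → ℝ → ℝ
  | [], t => t
  | a :: w, t => 1 / (a + cfWord w t)

theorem reads_congr {α β : ℤ → ℕ} {j k : ℤ} (h : ∀ n, α (j + n) = β (k + n)) (w : List ℕ) :
    Reads α j w ↔ Reads β k w := by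
  induction w generalizing j k with
  | nil => exact Iff.rfl
  | cons a w ih =>
    have hhead : α j = β k := by simpa only [add_zero] using h 0
    rw [Reads, Reads, hhead, ih (k := k + 1) fun n => by rw [add_assoc, add_assoc, h]]

theorem around_shift (α : ℤ → ℕ) (j k : ℤ) (u v : List ℕ) (a : ℕ) :
    Around (fun n => α (j + n)) k u a v ↔ Around α (j + k) u a v :=
  and_congr Iff.rfl (and_congr
    (reads_congr (fun n => by simp only [reversal]; congr 1; ring) u)
    (reads_congr (fun n => by simp only [add_assoc]) v))

theorem around_reversal {α : ℤ → ℕ} {k : ℤ} {u v : List ℕ} {a : ℕ} :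
    Around (reversal α) k v a u ↔ Around α (-k) u a v := by
  simp only [Around, reversal_reversal, sub_neg_eq_add, add_comm 1 k, neg_add_eq_sub,
    and_comm (a := Reads α _ v), reversal]

theorem cfWord_pos (w : List ℕ) {t : ℝ} (ht : 0 < t) : 0 < cfWord w t := by
  induction w with
  | nil => exact ht
  | cons a w ih =>
    rw [cfWord]
    positivity

theorem antitoneOn_one_div_natCast_add (a : ℕ) : AntitoneOn (fun t : ℝ => 1 / (a + t)) (Ioi 0) :=
  fun s hs t _ hst => by
    have : 0 < s := hs
    dsimp only
    gcongr

theorem monotoneOn_or_antitoneOn_cfWord (w : List ℕ) :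
    (Even w.length → MonotoneOn (cfWord w) (Ioi 0)) ∧
      (Odd w.length → AntitoneOn (cfWord w) (Ioi 0)) := by
  induction w with
  | nil => exact ⟨fun _ => monotoneOn_id, fun h => absurd h (by decide)⟩
  | cons a w ih =>
    have hmaps : MapsTo (cfWord w) (Ioi 0) (Ioi 0) := fun t => cfWord_pos w
    rw [List.length_cons, Nat.even_add_one, Nat.odd_add_one, Nat.not_even_iff_odd,
      Nat.not_odd_iff_even]
    exact ⟨fun h => (antitoneOn_one_div_natCast_add a).comp (ih.2 h) hmaps,
      fun h => (antitoneOn_one_div_natCast_add a).comp_MonotoneOn (ih.1 h) hmaps⟩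

theorem monotoneOn_cfWord {w : List ℕ} (hw : Even w.length) : MonotoneOn (cfWord w) (Ioi 0) :=
  (monotoneOn_or_antitoneOn_cfWord w).1 hw

theorem antitoneOn_cfWord {w : List ℕ} (hw : Odd w.length) : AntitoneOn (cfWord w) (Ioi 0) :=
  (monotoneOn_or_antitoneOn_cfWord w).2 hw

theorem min_cfWord_le {p q t : ℝ} (hp : 0 < p) (ht : t ∈ Icc p q) (w : List ℕ) :
    min (cfWord w p) (cfWord w q) ≤ cfWord w t := by
  have ht0 : t ∈ Ioi 0 := hp.trans_le ht.1
  have hq0 : q ∈ Ioi 0 := ht0.trans_le ht.2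
  rcases Nat.even_or_odd w.length with hw | hw
  · exact min_le_of_left_le (monotoneOn_cfWord hw hp ht0 ht.1)
  · exact min_le_of_right_le (antitoneOn_cfWord hw ht0 hq0 ht.2)

section Positive

variable {α : ℤ → ℕ} (hα : ∀ n, 0 < α n) {k : ℤ}
include hα

theorem cfTail_eq_cfWord {w : List ℕ} (h : Reads α k w) :
    cfTail α k = cfWord w (cfTail α (k + w.length)) := by
  induction w generalizing k with
  | nil => simp only [cfWord, List.length_nil, Nat.cast_zero, add_zero]
  | cons a w ih =>
    rw [cfTail_eq hα, h.1, ih h.2, cfWord, List.length_cons, Nat.cast_succ, add_assoc,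
      add_comm (1 : ℤ)]

theorem lambdaVal_eq_of_around {u v : List ℕ} {a : ℕ} (h : Around α k u a v) :
    lambdaVal α k = a + cfWord u (cfTail (reversal α) (1 - k + u.length)) +
      cfWord v (cfTail α (k + 1 + v.length)) := by
  obtain ⟨hcentre, hleft, hright⟩ := h
  rw [lambdaVal_eq hα, hcentre, cfTail_eq_cfWord hα hright,
    cfTail_eq_cfWord (α := reversal α) (fun n => hα (-n)) hleft, add_right_comm]

theorem min_cfWord_le_cfTail {p q : ℝ} (hp : 0 < p) (htail : ∀ k, cfTail α k ∈ Icc p q)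
    {w : List ℕ} (h : Reads α k w) : min (cfWord w p) (cfWord w q) ≤ cfTail α k :=
  (min_cfWord_le hp (htail _) w).trans_eq (cfTail_eq_cfWord hα h).symm

theorem le_lambdaVal_of_around {p q : ℝ} (hp : 0 < p) (hright : ∀ k, cfTail α k ∈ Icc p q)
    (hleft : ∀ k, cfTail (reversal α) k ∈ Icc p q) {u v : List ℕ} {a : ℕ}
    (h : Around α k u a v) :
    a + min (cfWord u p) (cfWord u q) + min (cfWord v p) (cfWord v q) ≤ lambdaVal α k := by
  rw [lambdaVal_eq_of_around hα h]
  gcongr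
  · exact min_cfWord_le hp (hleft _) u
  · exact min_cfWord_le hp (hright _) v

end Positive

/-! ### Sequences over the alphabet `{1, 2}` -/

/-- The sequence takes only the values `1` and `2`. -/
def OneTwo (α : ℤ → ℕ) : Prop := ∀ n, α n = 1 ∨ α n = 2

theorem oneTwo_of_lambdaVal_lt {α : ℤ → ℕ} (hα : ∀ n, 0 < α n)
    (h : ∀ k, lambdaVal α k < 7 / 2) : OneTwo α := by
  have hrev : ∀ n, 0 < reversal α n := fun n => hα (-n)
  have le_three (k : ℤ) : α k ≤ 3 := by
    have hk := h k
    rw [lambdaVal_eq hα] at hk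
    have : (α k : ℝ) < 4 := by linarith [cfTail_pos hα (k + 1), cfTail_pos hrev (1 - k)]
    exact Nat.lt_succ_iff.1 (by exact_mod_cast this)
  intro k
  have hk := h k
  rw [lambdaVal_eq hα] at hk
  have hright := one_div_add_one_le_cfTail hα (le_three (k + 1))
  have hleft := one_div_add_one_le_cfTail hrev (le_three (-(1 - k)))
  have lt_three : (α k : ℝ) < 3 := by norm_num at hright hleft; linarith
  have : α k < 3 := by exact_mod_cast lt_three
  have := hα k
  omega

theorem OneTwo.pos {α : ℤ → ℕ} (hα : OneTwo α) (n : ℤ) : 0 < α n := by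
  rcases hα n with h | h <;> omega

protected theorem OneTwo.reversal {α : ℤ → ℕ} (hα : OneTwo α) : OneTwo (reversal α) :=
  fun n => hα (-n)

theorem OneTwo.cfTail_mem_Icc_of_forall {α : ℤ → ℕ} (hα : OneTwo α) {p q : ℝ} (hp : 0 ≤ p)
    (h : ∀ k, cfTail α k ∈ Icc p q) (k : ℤ) :
    cfTail α k ∈ Icc (1 / (2 + q)) (1 / (1 + p)) := by
  have hdigit : (1 : ℝ) ≤ α k ∧ (α k : ℝ) ≤ 2 := by rcases hα k with e | e <;> norm_num [e]
  have hpos := cfTail_pos hα.pos (k + 1)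
  rw [cfTail_eq hα.pos]
  exact ⟨one_div_le_one_div_of_le (by linarith) (add_le_add hdigit.2 (h (k + 1)).2),
    one_div_le_one_div_of_le (by linarith) (add_le_add hdigit.1 (h (k + 1)).1)⟩

theorem OneTwo.cfTail_mem_Icc {α : ℤ → ℕ} (hα : OneTwo α) (k : ℤ) :
    cfTail α k ∈ Icc (4 / 11 : ℝ) (11 / 15) := by
  have h0 (k : ℤ) : cfTail α k ∈ Icc (0 : ℝ) 1 :=
    ⟨(cfTail_pos hα.pos k).le, cfTail_le_one hα.pos k⟩
  have h1 := hα.cfTail_mem_Icc_of_forall le_rfl h0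
  have h2 := hα.cfTail_mem_Icc_of_forall (by norm_num) h1
  have h3 := hα.cfTail_mem_Icc_of_forall (by norm_num) h2
  have h4 := hα.cfTail_mem_Icc_of_forall (by norm_num) h3 k
  exact ⟨le_trans (by norm_num) h4.1, h4.2.trans (by norm_num)⟩

theorem OneTwo.cfTail_le_of_eq_two {α : ℤ → ℕ} (hα : OneTwo α) {k : ℤ} (hk : α k = 2) :
    cfTail α k ≤ 11 / 26 := by
  rw [cfTail_eq hα.pos, hk]
  calc 1 / ((2 : ℕ) + cfTail α (k + 1)) ≤ 1 / ((2 : ℕ) + 4 / 11) := by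
        gcongr
        exact (hα.cfTail_mem_Icc (k + 1)).1
    _ = 11 / 26 := by norm_num

theorem OneTwo.lambdaVal_le_of_not_around_121 {α : ℤ → ℕ} (hα : OneTwo α) {k : ℤ}
    (h : ¬Around α k [1] 2 [1]) : lambdaVal α k ≤ 317 / 100 := by
  have hright := (hα.cfTail_mem_Icc (k + 1)).2
  have hleft := (hα.reversal.cfTail_mem_Icc (1 - k)).2
  rw [lambdaVal_eq hα.pos]
  rcases hα k with hk | hk
  · rw [hk]
    push_cast
    linarith
  rw [hk]
  rcases hα (k + 1) with h1 | h1
  · have hneg : reversal α (1 - k) = 2 :=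
      (hα.reversal _).resolve_left fun e => h ⟨hk, ⟨e, trivial⟩, h1, trivial⟩
    have := hα.reversal.cfTail_le_of_eq_two hneg
    push_cast
    linarith
  · have := hα.cfTail_le_of_eq_two h1
    push_cast
    linarith

theorem OneTwo.isGreatest_lambdaVal {α : ℤ → ℕ} (hα : OneTwo α) {x : ℝ} (hx : 317 / 100 ≤ x)
    {k₀ : ℤ} (hk₀ : lambdaVal α k₀ = x) (h : ∀ k, Around α k [1] 2 [1] → lambdaVal α k = x) :
    IsGreatest (range (lambdaVal α)) x := by
  refine ⟨⟨k₀, hk₀⟩, forall_mem_range.2 fun k => ?_⟩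
  by_cases hk : Around α k [1] 2 [1]
  · exact (h k hk).le
  · exact (hα.lambdaVal_le_of_not_around_121 hk).trans hx

/-! ### The least tail and the endpoints -/

/-- The value `[0; 2, 1, 2, 2, 2, 1, 2, 2, ...]`, the least tail of a sequence over `{1, 2}` without
the word `2121`. -/
noncomputable def minTail : ℝ := √30 / 4 - 1

theorem sqrt_thirty_mem_Ioo : √30 ∈ Ioo (54772 / 10000 : ℝ) (5477226 / 1000000) :=
  ⟨Real.lt_sqrt_of_sq_lt (by norm_num), (Real.sqrt_lt' (by norm_num)).2 (by norm_num)⟩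

theorem sqrt_thirty_eq : √30 = 4 * minTail + 4 := by
  rw [minTail]
  ring

theorem minTail_mem_Ioo : minTail ∈ Ioo (3693 / 10000 : ℝ) (3694 / 10000) := by
  have h := sqrt_thirty_mem_Ioo
  constructor <;> rw [minTail] <;> linarith [h.1, h.2]

theorem minTail_pos : 0 < minTail := lt_trans (by norm_num) minTail_mem_Ioo.1

theorem minTail_quadratic : 8 * minTail ^ 2 + 16 * minTail = 7 := by
  have h : √30 ^ 2 = (30 : ℝ) := Real.sq_sqrt (by norm_num)
  rw [minTail]
  linear_combination h / 2

theorem cfWord_2122 {t : ℝ} (ht : 0 < t) : cfWord [2, 1, 2, 2] t = (7 + 3 * t) / (19 + 8 * t) := by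
  simp only [cfWord, Nat.cast_ofNat, Nat.cast_one]
  field_simp
  ring

theorem minTail_le_of_cfWord_2122_le {t : ℝ} (ht : 0 < t) (h : cfWord [2, 1, 2, 2] t ≤ t) :
    minTail ≤ t := by
  rw [cfWord_2122 ht, div_le_iff₀ (by positivity)] at h
  by_contra! hlt
  nlinarith [minTail_quadratic, minTail_pos]

theorem eq_minTail_of_cfWord_2122_eq {t : ℝ} (ht : 0 < t) (h : cfWord [2, 1, 2, 2] t = t) :
    t = minTail := by
  refine le_antisymm ?_ (minTail_le_of_cfWord_2122_le ht h.le)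
  rw [cfWord_2122 ht, div_eq_iff (by positivity)] at h
  by_contra! hlt
  nlinarith [minTail_quadratic, minTail_pos]

theorem cfTail_eq_minTail {α : ℤ → ℕ} (hα : ∀ n, 0 < α n) {k : ℤ} (h : Reads α k [2, 1, 2, 2])
    (hperiod : cfTail α (k + 4) = cfTail α k) : cfTail α k = minTail := by
  have hfix := cfTail_eq_cfWord hα h
  simp only [List.length_cons, List.length_nil, zero_add, Nat.reduceAdd, Nat.cast_ofNat,
    hperiod] at hfix
  exact eq_minTail_of_cfWord_2122_eq (cfTail_pos hα k) hfix.symm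

theorem OneTwo.le_cfTail_or_reads_2122 {α : ℤ → ℕ} (hα : OneTwo α) {k : ℤ}
    (h2121 : ¬Reads α k [2, 1, 2, 1]) :
    3694 / 10000 ≤ cfTail α k ∨ Reads α k [2, 1, 2, 2] := by
  have large {w : List ℕ} (hw : Reads α k w)
      (hbound : 3694 / 10000 ≤ min (cfWord w (4 / 11)) (cfWord w (11 / 15))) :
      3694 / 10000 ≤ cfTail α k :=
    hbound.trans (min_cfWord_le_cfTail hα.pos (by norm_num) hα.cfTail_mem_Icc hw)
  rcases hα k with h0 | h0
  · exact .inl (large (w := [1]) ⟨h0, trivial⟩ (by norm_num [cfWord]))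
  rcases hα (k + 1) with h1 | h1
  swap
  · exact .inl (large (w := [2, 2]) ⟨h0, h1, trivial⟩ (by norm_num [cfWord]))
  rcases hα (k + 1 + 1) with h2 | h2
  · exact .inl (large (w := [2, 1, 1]) ⟨h0, h1, h2, trivial⟩ (by norm_num [cfWord]))
  · exact .inr ⟨h0, h1, h2, (hα _).resolve_left fun h3 => h2121 ⟨h0, h1, h2, h3, trivial⟩, trivial⟩

theorem OneTwo.minTail_le_cfTail {α : ℤ → ℕ} (hα : OneTwo α)
    (h2121 : ∀ k, ¬Reads α k [2, 1, 2, 1]) (k : ℤ) : minTail ≤ cfTail α k := by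
  have hbdd : BddBelow (range (cfTail α)) :=
    ⟨0, forall_mem_range.2 fun k => (cfTail_pos hα.pos k).le⟩
  set m := ⨅ k, cfTail α k
  have hm : 0 < m :=
    lt_of_lt_of_le (by norm_num) (le_ciInf fun k => (hα.cfTail_mem_Icc k).1)
  have hmin : min (3694 / 10000) (cfWord [2, 1, 2, 2] m) ≤ m := le_ciInf fun k => by
    rcases hα.le_cfTail_or_reads_2122 (h2121 k) with h | h
    · exact min_le_of_left_le h
    · rw [cfTail_eq_cfWord hα.pos h]
      exact min_le_of_right_le
        (monotoneOn_cfWord (by decide) hm (cfTail_pos hα.pos _) (ciInf_le hbdd _))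
  refine le_trans ?_ (ciInf_le hbdd k)
  rcases min_le_iff.1 hmin with h | h
  · exact minTail_mem_Ioo.2.le.trans h
  · exact minTail_le_of_cfWord_2122_le hm h

theorem cfWord_112 {t : ℝ} (ht : 0 < t) : cfWord [1, 1, 2] t = (3 + t) / (5 + 2 * t) := by
  simp only [cfWord, Nat.cast_ofNat, Nat.cast_one]
  field_simp
  ring

theorem cfWord_111122_minTail : cfWord [1, 1, 1, 1, 2, 2] minTail = 32 / 57 + 8 / 57 * minTail := by
  have hm := minTail_pos
  simp only [cfWord, Nat.cast_ofNat, Nat.cast_one]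
  field_simp
  linear_combination -13 * minTail_quadratic

theorem monotoneOn_add_cfWord_112 : MonotoneOn (fun t => t + cfWord [1, 1, 2] t) (Ioi 0) := by
  intro s (hs : 0 < s) t (ht : 0 < t) hst
  have hdiff : s + (3 + s) / (5 + 2 * s) - (t + (3 + t) / (5 + 2 * t)) =
      (s - t) * (1 - 1 / ((5 + 2 * s) * (5 + 2 * t))) := by
    field_simp
    ring
  have hfactor : 1 / ((5 + 2 * s) * (5 + 2 * t)) ≤ 1 :=
    div_le_one_of_le₀ (by nlinarith [mul_pos hs ht]) (by positivity)
  simp only [cfWord_112 hs, cfWord_112 ht]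
  nlinarith

theorem gapLeft_eq : gapLeft = 2 + 2 * cfWord [1, 1, 2] minTail := by
  have hm := minTail_pos
  rw [gapLeft, sqrt_thirty_eq, cfWord_112 hm]
  field_simp
  linear_combination -minTail_quadratic

theorem gapRight_eq :
    gapRight = 2 + cfWord [1, 1, 1, 1, 2, 2] minTail +
      cfWord [1, 1, 2] (cfWord [1, 1, 1, 1, 2, 2] minTail) := by
  have hm := minTail_pos
  have houter : cfWord [1, 1, 2] (cfWord [1, 1, 1, 1, 2, 2] minTail) =
      1127 / 1937 - 8 / 1937 * minTail := by
    rw [cfWord_112 (cfWord_pos _ hm), cfWord_111122_minTail, div_eq_iff (by positivity)]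
    linear_combination (16 / 110409) * minTail_quadratic
  rw [houter, cfWord_111122_minTail, gapRight, sqrt_thirty_eq]
  ring

theorem gapLeft_gt : 317 / 100 < gapLeft := by
  rw [gapLeft]
  linarith [sqrt_thirty_mem_Ioo.2]

theorem gapRight_lt : gapRight < 319354 / 100000 := by
  rw [gapRight]
  linarith [sqrt_thirty_mem_Ioo.2]

theorem gapPoint_mem_Ioo : gapPoint ∈ Ioo gapLeft gapRight := by
  have hlt : (98953 / 1000 : ℝ) < √9797 := Real.lt_sqrt_of_sq_lt (by norm_num)
  have hgt : √9797 < (98982 / 1000 : ℝ) := (Real.sqrt_lt' (by norm_num)).2 (by norm_num)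
  constructor <;> rw [gapPoint]
  · rw [gapLeft]
    linarith [sqrt_thirty_mem_Ioo.1]
  · rw [gapRight]
    linarith [sqrt_thirty_mem_Ioo.1]

/-! ### Words forbidden below the right endpoint -/

/-- A sequence of positive integers all of whose `λ`-values are below the right endpoint. -/
structure Admissible (α : ℤ → ℕ) : Prop where
  pos : ∀ n, 0 < α n
  lambdaVal_lt : ∀ k, lambdaVal α k < gapRight

namespace Admissible

variable {α : ℤ → ℕ} (hα : Admissible α)
include hα

theorem oneTwo : OneTwo α :=
  oneTwo_of_lambdaVal_lt hα.pos fun k =>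
    (hα.lambdaVal_lt k).trans (gapRight_lt.trans (by norm_num))

protected theorem reversal : Admissible (reversal α) :=
  ⟨hα.oneTwo.reversal.pos, fun k => by
    rw [lambdaVal_reversal hα.pos]
    exact hα.lambdaVal_lt _⟩

theorem shift (j : ℤ) : Admissible fun n => α (j + n) :=
  ⟨fun n => hα.pos (j + n), fun k => by
    rw [lambdaVal_shift]
    exact hα.lambdaVal_lt _⟩

theorem not_around_of_bounds {p q : ℝ} (hp : 0 < p) (hright : ∀ k, cfTail α k ∈ Icc p q)
    (hleft : ∀ k, cfTail (reversal α) k ∈ Icc p q) {k : ℤ} {u v : List ℕ}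
    (hbound : 319354 / 100000 ≤
      2 + min (cfWord u p) (cfWord u q) + min (cfWord v p) (cfWord v q)) :
    ¬Around α k u 2 v := fun h => by
  have hle := le_lambdaVal_of_around hα.pos hp hright hleft h
  push_cast at hle
  linarith [hα.lambdaVal_lt k, gapRight_lt]

theorem not_around_1_2_12 {k : ℤ} : ¬Around α k [1] 2 [1, 2] :=
  hα.not_around_of_bounds (by norm_num) hα.oneTwo.cfTail_mem_Icc
    hα.oneTwo.reversal.cfTail_mem_Icc (by norm_num [cfWord])

theorem not_reads_2121 (k : ℤ) : ¬Reads α k [2, 1, 2, 1] := fun h => by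
  obtain ⟨h0, h1, h2, h3⟩ : α k = 2 ∧ α (k + 1) = 1 ∧ α (k + 2) = 2 ∧ α (k + 3) = 1 := by
    simpa [Reads, add_assoc] using h
  exact (hα.shift k).reversal.not_around_1_2_12 (k := -2)
    (by simp [Around, Reads, reversal, *])

theorem minTail_le_cfTail (k : ℤ) : minTail ≤ cfTail α k :=
  hα.oneTwo.minTail_le_cfTail hα.not_reads_2121 k

theorem cfTail_mem_Icc (k : ℤ) : cfTail α k ∈ Icc (3693 / 10000 : ℝ) (7304 / 10000) := by
  have hge (k : ℤ) : 3693 / 10000 ≤ cfTail α k :=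
    minTail_mem_Ioo.1.le.trans (hα.minTail_le_cfTail k)
  refine ⟨hge k, ?_⟩
  have hdigit : (1 : ℝ) ≤ α k := by exact_mod_cast hα.pos k
  rw [cfTail_eq hα.pos]
  calc 1 / (α k + cfTail α (k + 1)) ≤ 1 / (1 + 3693 / 10000) := by
        gcongr
        exact hge (k + 1)
    _ ≤ 7304 / 10000 := by norm_num

theorem not_around_of_le {k : ℤ} {u v : List ℕ}
    (hbound : 319354 / 100000 ≤
      2 + min (cfWord u (3693 / 10000)) (cfWord u (7304 / 10000)) +
        min (cfWord v (3693 / 10000)) (cfWord v (7304 / 10000))) :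
    ¬Around α k u 2 v :=
  hα.not_around_of_bounds (by norm_num) hα.cfTail_mem_Icc hα.reversal.cfTail_mem_Icc hbound

theorem not_around_111_2_111 {k : ℤ} : ¬Around α k [1, 1, 1] 2 [1, 1, 1] :=
  hα.not_around_of_le (by norm_num [cfWord])

theorem not_around_1_2_1112 {k : ℤ} : ¬Around α k [1] 2 [1, 1, 1, 2] :=
  hα.not_around_of_le (by norm_num [cfWord])

theorem not_around_1_2_11111 {k : ℤ} : ¬Around α k [1] 2 [1, 1, 1, 1, 1] :=
  hα.not_around_of_le (by norm_num [cfWord])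

theorem not_around_111_2_1122 {k : ℤ} : ¬Around α k [1, 1, 1] 2 [1, 1, 2, 2] :=
  hα.not_around_of_le (by norm_num [cfWord])

theorem not_around_111122_2_112112 {k : ℤ} :
    ¬Around α k [1, 1, 1, 1, 2, 2] 2 [1, 1, 2, 1, 1, 2] :=
  hα.not_around_of_le (by norm_num [cfWord])

theorem not_around_111121121_2_112112 {k : ℤ} :
    ¬Around α k [1, 1, 1, 1, 2, 1, 1, 2, 1] 2 [1, 1, 2, 1, 1, 2] :=
  hα.not_around_of_le (by norm_num [cfWord])

theorem not_around_112111121_2_111122 {k : ℤ} :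
    ¬Around α k [1, 1, 2, 1, 1, 1, 1, 2, 1] 2 [1, 1, 1, 1, 2, 2] :=
  hα.not_around_of_le (by norm_num [cfWord])

/-- The only forbidden word for which crude tail bounds do not suffice: its `λ`-values can equal the
right endpoint. -/
theorem not_around_111122_2_112111122 :
    ¬Around α 0 [1, 1, 1, 1, 2, 2] 2 [1, 1, 2, 1, 1, 1, 1, 2, 2] := fun h => by
  obtain ⟨hleft, hright, hzero, hthree⟩ :
      Reads (reversal α) 1 [1, 1, 1, 1, 2, 2] ∧ Reads α 4 [1, 1, 1, 1, 2, 2] ∧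
        Around α 0 [] 2 [1, 1, 2] ∧ Around α 3 [1, 1, 2] 2 [] := by
    simp_all [Around, Reads, reversal]
  have least_le {β : ℤ → ℕ} (hβ : Admissible β) {k : ℤ} (h : Reads β k [1, 1, 1, 1, 2, 2]) :
      cfWord [1, 1, 1, 1, 2, 2] minTail ≤ cfTail β k := by
    rw [cfTail_eq_cfWord hβ.pos h]
    exact monotoneOn_cfWord (by decide) minTail_pos (cfTail_pos hβ.pos _)
      (hβ.minTail_le_cfTail _)
  set x := cfTail (reversal α) 1
  set y := cfTail α 4
  have hx : cfWord [1, 1, 1, 1, 2, 2] minTail ≤ x := least_le hα.reversal hleft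
  have hy : cfWord [1, 1, 1, 1, 2, 2] minTail ≤ y := least_le hα hright
  have hzero : lambdaVal α 0 = 2 + x + cfWord [1, 1, 2] y := lambdaVal_eq_of_around hα.pos hzero
  have hthree : lambdaVal α 3 = 2 + cfWord [1, 1, 2] x + y := lambdaVal_eq_of_around hα.pos hthree
  have gapRight_le {t : ℝ} (ht : cfWord [1, 1, 1, 1, 2, 2] minTail ≤ t) :
      gapRight ≤ 2 + (t + cfWord [1, 1, 2] t) := by
    have hX := cfWord_pos [1, 1, 1, 1, 2, 2] minTail_pos
    rw [gapRight_eq, add_assoc]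
    exact add_le_add_right (monotoneOn_add_cfWord_112 hX (hX.trans_le ht) ht) 2
  rcases le_total x y with hxy | hyx
  · linarith [hα.lambdaVal_lt 3, gapRight_le hx]
  · linarith [hα.lambdaVal_lt 0, gapRight_le hy]

/-! ### Propagation of the block `2 1111 2 112` -/

theorem reads_right_of_around_121 {k : ℤ} (h : Around α k [1] 2 [1]) :
    Reads α (k + 1) [1, 1, 2] ∨ Reads α (k + 1) [1, 1, 1, 1, 2] := by
  obtain ⟨h0, hleft, h1, -⟩ := h
  have h2 : α (k + 1 + 1) = 1 := (hα.oneTwo _).resolve_right fun h2 =>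
    hα.not_around_1_2_12 ⟨h0, hleft, h1, h2, trivial⟩
  rcases hα.oneTwo (k + 1 + 1 + 1) with h3 | h3
  · have h4 : α (k + 1 + 1 + 1 + 1) = 1 := (hα.oneTwo _).resolve_right fun h4 =>
      hα.not_around_1_2_1112 ⟨h0, hleft, h1, h2, h3, h4, trivial⟩
    have h5 : α (k + 1 + 1 + 1 + 1 + 1) = 2 := (hα.oneTwo _).resolve_left fun h5 =>
      hα.not_around_1_2_11111 ⟨h0, hleft, h1, h2, h3, h4, h5, trivial⟩
    exact Or.inr ⟨h1, h2, h3, h4, h5, trivial⟩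
  · exact Or.inl ⟨h1, h2, h3, trivial⟩

theorem reads_left_of_around_121 {k : ℤ} (h : Around α k [1] 2 [1]) :
    Reads (reversal α) (1 - k) [1, 1, 2] ∨ Reads (reversal α) (1 - k) [1, 1, 1, 1, 2] := by
  have h' : Around (reversal α) (-k) [1] 2 [1] := by rwa [around_reversal, neg_neg]
  rw [sub_eq_neg_add]
  exact hα.reversal.reads_right_of_around_121 h'

theorem lambdaVal_le_gapLeft_of_around {k : ℤ} (h : Around α k [1, 1, 2] 2 [1, 1, 2]) :
    lambdaVal α k ≤ gapLeft := by
  have cfWord_le {β : ℤ → ℕ} (hβ : Admissible β) (j : ℤ) :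
      cfWord [1, 1, 2] (cfTail β j) ≤ cfWord [1, 1, 2] minTail :=
    antitoneOn_cfWord (by decide) minTail_pos (cfTail_pos hβ.pos j) (hβ.minTail_le_cfTail j)
  rw [lambdaVal_eq_of_around hα.pos h, gapLeft_eq, two_mul, ← add_assoc]
  exact add_le_add (add_le_add_right (cfWord_le hα.reversal _) _) (cfWord_le hα _)

theorem around_of_gapLeft_lt {k : ℤ} (h : gapLeft < lambdaVal α k) :
    Around α k [1, 1, 1, 1, 2] 2 [1, 1, 2] ∨ Around α k [1, 1, 2] 2 [1, 1, 1, 1, 2] := by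
  have hcentre : Around α k [1] 2 [1] := by
    by_contra hne
    exact (hα.oneTwo.lambdaVal_le_of_not_around_121 hne).not_gt (gapLeft_gt.trans h)
  rcases hα.reads_left_of_around_121 hcentre with hl | hl <;>
    rcases hα.reads_right_of_around_121 hcentre with hr | hr
  · exact absurd h (hα.lambdaVal_le_gapLeft_of_around ⟨hcentre.1, hl, hr⟩).not_gt
  · exact Or.inr ⟨hcentre.1, hl, hr⟩
  · exact Or.inl ⟨hcentre.1, hl, hr⟩
  · exact absurd ⟨hcentre.1, by simp_all [Reads], by simp_all [Reads]⟩
      (hα.not_around_111_2_111 (k := k))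

theorem not_around_11112_2_112112 : ¬Around α 0 [1, 1, 1, 1, 2] 2 [1, 1, 2, 1, 1, 2] := fun h => by
  have hneg6 : α (-6) = 1 := (hα.oneTwo _).resolve_right fun hneg6 =>
    hα.not_around_111122_2_112112 (k := 0) (by simp_all [Around, Reads, reversal])
  rcases hα.reads_left_of_around_121 (k := -5) (by simp_all [Around, Reads, reversal])
    with hl | hl
  · have hneg9 : α (-9) = 1 := (hα.oneTwo _).resolve_right fun hneg9 =>
      hα.reversal.not_around_111_2_1122 (k := 5) (by simp_all [Around, Reads, reversal])
    exact hα.not_around_111121121_2_112112 (k := 0) (by simp_all [Around, Reads, reversal])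
  · exact hα.not_around_111_2_111 (k := -5) (by simp_all [Around, Reads, reversal])

theorem around_three (h : Around α 0 [1, 1, 1, 1, 2] 2 [1, 1, 2]) :
    Around α 3 [1, 1, 2] 2 [1, 1, 1, 1, 2] := by
  have h4 : α 4 = 1 := (hα.oneTwo _).resolve_right fun h4 =>
    hα.not_around_111_2_1122 (k := 0) (by simp_all [Around, Reads, reversal])
  have hcentre : Around α 3 [1] 2 [1] := by simp_all [Around, Reads, reversal]
  rcases hα.reads_right_of_around_121 hcentre with hr | hr
  · exact absurd (by simp_all [Around, Reads, reversal]) hα.not_around_11112_2_112112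
  · simp_all [Around, Reads, reversal]

theorem around_eight (h : Around α 0 [1, 1, 1, 1, 2] 2 [1, 1, 2]) :
    Around α 8 [1, 1, 1, 1, 2] 2 [1, 1, 2] := by
  have h3 := hα.around_three h
  have h9 : α 9 = 1 := (hα.oneTwo _).resolve_right fun h9 => by
    rcases hα.oneTwo (-6) with hneg6 | hneg6
    · exact hα.not_around_112111121_2_111122 (k := 3)
        (by simp_all [Around, Reads, reversal])
    · exact hα.not_around_111122_2_112111122 (by simp_all [Around, Reads, reversal])
  have hcentre : Around α 8 [1] 2 [1] := by simp_all [Around, Reads, reversal]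
  rcases hα.reads_right_of_around_121 hcentre with hr | hr
  · simp_all [Around, Reads, reversal]
  · exact absurd (by simp_all [Around, Reads, reversal])
      (hα.not_around_111_2_111 (k := 8))

end Admissible

/-! ### The isolated sequence -/

/-- The `8`-periodic sequence with period `2 112 1111`, starting at position `0`. -/
def gapSeq (n : ℤ) : ℕ := if n % 8 = 0 ∨ n % 8 = 3 then 2 else 1

theorem oneTwo_gapSeq : OneTwo gapSeq := fun n => by
  unfold gapSeq
  split_ifs
  exacts [.inr rfl, .inl rfl]

theorem gapSeq_add_mul_eight (n m : ℤ) : gapSeq (n + 8 * m) = gapSeq n := by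
  simp only [gapSeq, Int.add_mul_emod_self_left]

theorem gapSeq_three_sub (n : ℤ) : gapSeq (3 - n) = gapSeq n := by
  unfold gapSeq
  congr 1
  apply propext
  omega

theorem eq_gapSeq_of_around {α : ℤ → ℕ} (h : Around α 0 [1, 1, 1, 1, 2] 2 [1, 1, 2]) {r : ℤ}
    (hr : r ∈ Ico (-4) 4) : α r = gapSeq r := by
  obtain ⟨hl, hu⟩ := hr
  interval_cases r <;> simp_all [Around, Reads, reversal, gapSeq]

namespace Admissible

variable {α : ℤ → ℕ} (hα : Admissible α) {k : ℤ}
include hα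

theorem around_add_three (h : Around α k [1, 1, 1, 1, 2] 2 [1, 1, 2]) :
    Around α (k + 3) [1, 1, 2] 2 [1, 1, 1, 1, 2] := by
  rw [← add_zero k, ← around_shift] at h
  exact (around_shift ..).1 ((hα.shift k).around_three h)

theorem around_add_eight (h : Around α k [1, 1, 1, 1, 2] 2 [1, 1, 2]) :
    Around α (k + 8) [1, 1, 1, 1, 2] 2 [1, 1, 2] := by
  rw [← add_zero k, ← around_shift] at h
  exact (around_shift ..).1 ((hα.shift k).around_eight h)

theorem around_sub_eight (h : Around α k [1, 1, 1, 1, 2] 2 [1, 1, 2]) :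
    Around α (k - 8) [1, 1, 1, 1, 2] 2 [1, 1, 2] := by
  have hrev : Around (reversal α) (-(k + 3)) [1, 1, 1, 1, 2] 2 [1, 1, 2] := by
    rw [around_reversal, neg_neg]
    exact hα.around_add_three h
  have hnext := hα.reversal.around_add_three (hα.reversal.around_add_eight hrev)
  rw [around_reversal] at hnext
  convert hnext using 1
  ring

theorem around_add_mul_eight (h : Around α k [1, 1, 1, 1, 2] 2 [1, 1, 2]) (n : ℤ) :
    Around α (k + 8 * n) [1, 1, 1, 1, 2] 2 [1, 1, 2] := by
  induction n with
  | zero => rwa [mul_zero, add_zero]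
  | succ n ih =>
    rw [mul_add_one, ← add_assoc]
    exact hα.around_add_eight ih
  | pred n ih =>
    rw [mul_sub_one, ← add_sub_assoc]
    exact hα.around_sub_eight ih

theorem eq_gapSeq (h : Around α k [1, 1, 1, 1, 2] 2 [1, 1, 2]) (i : ℤ) :
    α (k + i) = gapSeq i := by
  obtain ⟨r, n, hr, rfl⟩ : ∃ r n : ℤ, r ∈ Ico (-4) 4 ∧ i = r + 8 * n :=
    ⟨(i + 4) % 8 - 4, (i + 4) / 8, ⟨by omega, by omega⟩, by omega⟩
  have hblock := hα.around_add_mul_eight h n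
  rw [← add_zero (k + 8 * n), ← around_shift] at hblock
  rw [gapSeq_add_mul_eight, ← eq_gapSeq_of_around hblock hr]
  congr 1
  ring

theorem markovValue_eq_gapSeq (h : Around α k [1, 1, 1, 1, 2] 2 [1, 1, 2]) :
    markovValue α = markovValue gapSeq := by
  rw [← markovValue_shift α k, funext (hα.eq_gapSeq h)]

theorem markovValue_eq_of_gapLeft_lt (h : gapLeft < lambdaVal α k) :
    markovValue α = markovValue gapSeq := by
  rcases hα.around_of_gapLeft_lt h with h | h
  · exact hα.markovValue_eq_gapSeq h
  · rw [← markovValue_reversal hα.pos]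
    exact hα.reversal.markovValue_eq_gapSeq (k := -k) (by rwa [around_reversal, neg_neg])

end Admissible

theorem lambdaVal_zero_of_symm {α : ℤ → ℕ} (hα : ∀ n, 0 < α n) (hsymm : ∀ n, α (3 - n) = α n)
    (h : Around α 0 [] 2 [1, 1, 2]) :
    lambdaVal α 0 = 2 + cfTail α 4 + cfWord [1, 1, 2] (cfTail α 4) := by
  rw [lambdaVal_eq_of_around hα h, cfTail_reversal_of_symm hsymm]
  rfl

theorem cfTail_gapSeq_four : cfTail gapSeq 4 = (√9797 - 61) / 62 := by
  have hperiod : cfTail gapSeq (4 + 8) = cfTail gapSeq 4 := cfTail_congr fun n => by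
    rw [add_right_comm]
    exact gapSeq_add_mul_eight (4 + n) 1
  have hfix : cfTail gapSeq 4 = cfWord [1, 1, 1, 1, 2, 1, 1, 2] (cfTail gapSeq (4 + 8)) :=
    cfTail_eq_cfWord oneTwo_gapSeq.pos (by simp [Reads, gapSeq])
  rw [hperiod] at hfix
  have hx := cfTail_pos oneTwo_gapSeq.pos 4
  generalize cfTail gapSeq 4 = x at hfix hx
  simp only [cfWord, Nat.cast_ofNat, Nat.cast_one] at hfix
  field_simp at hfix
  have hsq : 9797 = (62 * x + 61) ^ 2 := by linear_combination -124 * hfix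
  rw [hsq, Real.sqrt_sq (by positivity)]
  ring

theorem lambdaVal_gapSeq_zero : lambdaVal gapSeq 0 = gapPoint := by
  have hx := cfTail_pos oneTwo_gapSeq.pos 4
  have hsq : √9797 ^ 2 = (9797 : ℝ) := Real.sq_sqrt (by norm_num)
  have houter : cfWord [1, 1, 2] (cfTail gapSeq 4) = (√9797 - 63) / 62 := by
    rw [cfWord_112 hx, div_eq_iff (by positivity), cfTail_gapSeq_four]
    linear_combination -hsq / 1922
  rw [lambdaVal_zero_of_symm oneTwo_gapSeq.pos gapSeq_three_sub
    (by simp [Around, Reads, gapSeq]), houter, cfTail_gapSeq_four, gapPoint]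
  ring

theorem lambdaVal_gapSeq_add_mul_eight (k m : ℤ) :
    lambdaVal gapSeq (k + 8 * m) = lambdaVal gapSeq k :=
  lambdaVal_congr fun n => by rw [add_right_comm, gapSeq_add_mul_eight]

theorem isGreatest_lambdaVal_gapSeq : IsGreatest (range (lambdaVal gapSeq)) gapPoint := by
  refine oneTwo_gapSeq.isGreatest_lambdaVal (gapLeft_gt.trans gapPoint_mem_Ioo.1).le
    lambdaVal_gapSeq_zero fun k hk => ?_
  have hmod : k % 8 = 0 ∨ k % 8 = 3 := by
    by_contra hne
    exact absurd hk.1 (by rw [gapSeq, if_neg hne]; decide)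
  rw [← Int.emod_add_mul_ediv k 8, lambdaVal_gapSeq_add_mul_eight, ← lambdaVal_gapSeq_zero]
  rcases hmod with h | h <;> rw [h]
  exact lambdaVal_sub_of_symm oneTwo_gapSeq.pos gapSeq_three_sub 0

theorem markovValue_gapSeq : markovValue gapSeq = gapPoint :=
  markovValue_eq_of_isGreatest isGreatest_lambdaVal_gapSeq

/-! ### The endpoints -/

/-- The sequence `… 2122 2122 11 2 11 2212 2212 …`, symmetric about its central letter `2` at
position `0`. -/
def leftSeq (n : ℤ) : ℕ := if n.natAbs % 4 = 1 ∨ n.natAbs = 2 then 1 else 2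

theorem oneTwo_leftSeq : OneTwo leftSeq := fun n => by
  unfold leftSeq
  split_ifs
  exacts [.inl rfl, .inr rfl]

theorem leftSeq_zero_sub (n : ℤ) : leftSeq (0 - n) = leftSeq n := by
  simp only [leftSeq, zero_sub, Int.natAbs_neg]

theorem cfTail_leftSeq_four : cfTail leftSeq 4 = minTail := by
  refine cfTail_eq_minTail oneTwo_leftSeq.pos (by simp [Reads, leftSeq]) (cfTail_congr fun n => ?_)
  unfold leftSeq
  congr 1
  apply propext
  omega

theorem lambdaVal_leftSeq_zero : lambdaVal leftSeq 0 = gapLeft := by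
  have hword : Around leftSeq 0 [1, 1, 2] 2 [1, 1, 2] := by
    simp [Around, Reads, leftSeq, reversal]
  rw [lambdaVal_eq_of_around oneTwo_leftSeq.pos hword, cfTail_reversal_of_symm leftSeq_zero_sub,
    gapLeft_eq, ← cfTail_leftSeq_four, two_mul, ← add_assoc (2 : ℝ)]
  rfl

theorem isGreatest_lambdaVal_leftSeq : IsGreatest (range (lambdaVal leftSeq)) gapLeft := by
  refine oneTwo_leftSeq.isGreatest_lambdaVal gapLeft_gt.le lambdaVal_leftSeq_zero fun k hk => ?_
  have hzero : k = 0 := by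
    simp only [Around, Reads, leftSeq, reversal] at hk
    split_ifs at hk <;> omega
  rw [hzero, lambdaVal_leftSeq_zero]

/-- The sequence `… 2212 2212 22 1111 2 11 2 1111 22 2122 2122 …`, symmetric about its central word
`2 11 2` at positions `0` to `3`. -/
def rightSeq (n : ℤ) : ℕ :=
  if max n (3 - n) = 3 ∨ 8 ≤ max n (3 - n) ∧ max n (3 - n) % 4 ≠ 3 then 2 else 1

theorem oneTwo_rightSeq : OneTwo rightSeq := fun n => by
  unfold rightSeq
  split_ifs
  exacts [.inr rfl, .inl rfl]

theorem rightSeq_three_sub (n : ℤ) : rightSeq (3 - n) = rightSeq n := by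
  simp only [rightSeq, sub_sub_cancel, max_comm]

theorem cfTail_rightSeq_ten : cfTail rightSeq 10 = minTail := by
  refine cfTail_eq_minTail oneTwo_rightSeq.pos (by simp [Reads, rightSeq])
    (cfTail_congr fun n => ?_)
  unfold rightSeq
  congr 1
  apply propext
  omega

theorem lambdaVal_rightSeq_zero : lambdaVal rightSeq 0 = gapRight := by
  have htail : cfTail rightSeq 4 = cfWord [1, 1, 1, 1, 2, 2] (cfTail rightSeq 10) :=
    cfTail_eq_cfWord oneTwo_rightSeq.pos (by simp [Reads, rightSeq])
  rw [lambdaVal_zero_of_symm oneTwo_rightSeq.pos rightSeq_three_sub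
    (by simp [Around, Reads, rightSeq]), htail, cfTail_rightSeq_ten, gapRight_eq]

theorem isGreatest_lambdaVal_rightSeq : IsGreatest (range (lambdaVal rightSeq)) gapRight := by
  refine oneTwo_rightSeq.isGreatest_lambdaVal
    (gapLeft_gt.trans (gapPoint_mem_Ioo.1.trans gapPoint_mem_Ioo.2)).le
    lambdaVal_rightSeq_zero fun k hk => ?_
  have hcentre : k = 0 ∨ k = 3 := by
    simp only [Around, Reads, rightSeq, reversal] at hk
    split_ifs at hk <;> omega
  rw [← lambdaVal_rightSeq_zero]
  rcases hcentre with rfl | rfl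
  · rfl
  · exact lambdaVal_sub_of_symm oneTwo_rightSeq.pos rightSeq_three_sub 0

theorem eq_gapPoint_of_mem_markovSpectrum {x : ℝ} (hx : x ∈ markovSpectrum)
    (hgap : x ∈ Ioo gapLeft gapRight) : x = gapPoint := by
  obtain ⟨α, hpos, hbdd, rfl⟩ := hx
  have hα : Admissible α := ⟨hpos, fun k => (le_ciSup hbdd k).trans_lt hgap.2⟩
  obtain ⟨k, hk⟩ := exists_lt_of_lt_ciSup hgap.1
  rw [hα.markovValue_eq_of_gapLeft_lt hk, markovValue_gapSeq]

/-- The intersection of the Markov spectrum with the open interval consists of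
exactly one (hence isolated) point, and both endpoints belong to the Markov
spectrum. -/
theorem markov_gap_8 :
    markovSpectrum ∩ Ioo ((15 - Real.sqrt 30) / 3) ((332001 + 3760 * Real.sqrt 30) / 110409) = {(Real.sqrt 9797 / 31 : ℝ)} ∧
    ((15 - Real.sqrt 30) / 3) ∈ markovSpectrum ∧ ((332001 + 3760 * Real.sqrt 30) / 110409) ∈ markovSpectrum := by
  refine ⟨eq_singleton_iff_unique_mem.2 ⟨⟨?_, gapPoint_mem_Ioo⟩, fun x hx => ?_⟩, ?_, ?_⟩
  · exact mem_markovSpectrum_of_isGreatest oneTwo_gapSeq.pos isGreatest_lambdaVal_gapSeq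
  · exact eq_gapPoint_of_mem_markovSpectrum hx.1 hx.2
  · exact mem_markovSpectrum_of_isGreatest oneTwo_leftSeq.pos isGreatest_lambdaVal_leftSeq
  · exact mem_markovSpectrum_of_isGreatest oneTwo_rightSeq.pos isGreatest_lambdaVal_rightSeq
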